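/- For any Boolean function f: {-1,1}^n → {0,1} with W¹(f) > 0, there exists a halfspace g (of the form g(x) = 1{∑ f̂({i}) x_i > t} for some t ∈ ℝ) such that Cov(f,g) ≥ c·√(W¹(f) / log(e/W¹(f))), where c > 0 is an absolute constant. -/

import Mathlib

open Finset

noncomputable section
open scoped Classical

/-- The ±1 value associated to a Boolean bit. -/
def sgn1 (b : Bool) : ℝ := if b then 1 else -1

/-- Probability of an event under the uniform measure on `{-1,1}^n`. -/
def cubePr (n : ℕ) (P : (Fin n → Bool) → Prop) : ℝ :=
  ((univ.filter P).card : ℝ) / 2 ^ n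

/-- Expectation of a function under the uniform measure on `{-1,1}^n`. -/
def cubeE (n : ℕ) (f : (Fin n → Bool) → ℝ) : ℝ := (∑ x, f x) / 2 ^ n

/-- The linear form `a · x = ∑ aᵢ xᵢ` on `{-1,1}^n`. -/
def lin (n : ℕ) (a : Fin n → ℝ) (x : Fin n → Bool) : ℝ := ∑ i, a i * sgn1 (x i)

/-- The halfspace `1{a · x > t}` as a 0/1-valued function. -/
def halfspace (n : ℕ) (a : Fin n → ℝ) (t : ℝ) (x : Fin n → Bool) : ℝ :=
  if t < lin n a x then 1 else 0

/-- The influence of coordinate `i` on `f`: the probability that flipping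
coordinate `i` changes the value of `f`. -/
def infl (n : ℕ) (i : Fin n) (f : (Fin n → Bool) → ℝ) : ℝ :=
  cubePr n (fun x => f x ≠ f (Function.update x i (!x i)))

/-- The degree-1 Fourier coefficient `f̂({i}) = E[f(x)·xᵢ]`. -/
def fCoeff (n : ℕ) (f : (Fin n → Bool) → ℝ) (i : Fin n) : ℝ :=
  cubeE n (fun x => f x * sgn1 (x i))

/-- The degree-1 Fourier weight `W¹(f) = ∑ᵢ f̂({i})²`. -/
def W1 (n : ℕ) (f : (Fin n → Bool) → ℝ) : ℝ := ∑ i, (fCoeff n f i) ^ 2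



lemma aux_lin_neg (n : ℕ) (a : Fin n → ℝ) (x : Fin n → Bool) :
    lin n a (fun i => !x i) = - lin n a x := by
  unfold lin
  rw [← Finset.sum_neg_distrib]
  refine Finset.sum_congr rfl fun i _ => ?_
  cases h : x i <;> simp [sgn1, h]

/-- Negating every bit, as a permutation of the cube. -/
def auxFlip (n : ℕ) : (Fin n → Bool) ≃ (Fin n → Bool) where
  toFun x := fun i => !x i
  invFun x := fun i => !x i
  left_inv x := by funext i; simp
  right_inv x := by funext i; simp

lemma aux_sum_lin (n : ℕ) (a : Fin n → ℝ) : ∑ x, lin n a x = 0 := by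
  have h := Equiv.sum_comp (auxFlip n) (fun x => lin n a x)
  have h2 : ∑ x, lin n a (auxFlip n x) = ∑ x, - lin n a x :=
    Finset.sum_congr rfl fun x _ => aux_lin_neg n a x
  rw [Finset.sum_neg_distrib] at h2
  linarith

lemma aux_mgf (n : ℕ) (a : Fin n → ℝ) (r : ℝ) :
    ∑ x, Real.exp (r * lin n a x) ≤ 2 ^ n * Real.exp (r ^ 2 * (∑ i, a i ^ 2) / 2) := by
  have h1 : ∀ x, Real.exp (r * lin n a x) = ∏ i, Real.exp (r * (a i * sgn1 (x i))) := by
    intro x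
    rw [← Real.exp_sum]
    unfold lin
    rw [Finset.mul_sum]
  simp_rw [h1]
  have h2 := Finset.prod_univ_sum (fun _ : Fin n => (Finset.univ : Finset Bool))
    (fun i b => Real.exp (r * (a i * sgn1 b)))
  rw [Fintype.piFinset_univ] at h2
  rw [← h2]
  have h3 : ∀ i, ∑ b, Real.exp (r * (a i * sgn1 b)) ≤ 2 * Real.exp ((r * a i) ^ 2 / 2) := by
    intro i
    have := Real.cosh_le_exp_half_sq (r * a i)
    rw [Real.cosh_eq] at this
    simp only [Fintype.sum_bool, sgn1]
    simp
    linarith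
  calc _ ≤ ∏ i, (2 * Real.exp ((r * a i) ^ 2 / 2)) :=
        Finset.prod_le_prod (fun i _ => by positivity) (fun i _ => h3 i)
    _ = _ := by
        rw [Finset.prod_mul_distrib, ← Real.exp_sum]
        simp only [Finset.prod_const, Finset.card_univ, Fintype.card_fin]
        congr 2
        rw [Finset.mul_sum, Finset.sum_div]
        exact Finset.sum_congr rfl fun i _ => by ring

/-- Truncation to `[-T, T]`. -/
def auxClamp (T u : ℝ) : ℝ := max (-T) (min u T)

lemma aux_integral (T u : ℝ) (hT : 0 ≤ T) :
    IntervalIntegrable (fun t : ℝ => if t < u then (1 : ℝ) else 0) MeasureTheory.volume (-T) T ∧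
    ∫ t in (-T)..T, (if t < u then (1 : ℝ) else 0) = auxClamp T u + T := by
  have hanti : Antitone (fun t : ℝ => if t < u then (1 : ℝ) else 0) := by
    intro s t hst
    dsimp only
    split_ifs <;> linarith
  have hIntegral : ∀ p q : ℝ, IntervalIntegrable (fun t : ℝ => if t < u then (1 : ℝ) else 0)
      MeasureTheory.volume p q := fun p q => hanti.intervalIntegrable
  refine ⟨hIntegral _ _, ?_⟩
  set m := auxClamp T u with hm
  have hm1 : -T ≤ m := le_max_left _ _
  have hm2 : m ≤ T := max_le (by linarith) (min_le_right _ _)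
  rw [← intervalIntegral.integral_add_adjacent_intervals (hIntegral (-T) m) (hIntegral m T)]
  have e1 : ∫ t in (-T)..m, (if t < u then (1 : ℝ) else 0) = ∫ t in (-T)..m, (1 : ℝ) := by
    apply intervalIntegral.integral_congr_Ioo_of_le hm1
    intro t ht
    have : t < u := by
      have h := ht.2
      rw [hm, auxClamp, lt_max_iff] at h
      rcases h with h | h
      · exact absurd ht.1 (by linarith)
      · exact lt_of_lt_of_le h (min_le_left _ _)
    simp [this]
  have e2 : ∫ t in m..T, (if t < u then (1 : ℝ) else 0) = ∫ t in m..T, (0 : ℝ) := by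
    apply intervalIntegral.integral_congr_Ioo_of_le hm2
    intro t ht
    have : ¬ t < u := by
      intro hlt
      have h := ht.1
      have : min u T ≤ m := le_max_right _ _
      have h3 : t < min u T := lt_min hlt ht.2
      linarith
    simp [this]
  rw [e1, e2]
  simp

lemma aux_clamp_err (T u r : ℝ) (hT : 0 ≤ T) (hr : 0 < r) :
    |u - auxClamp T u| ≤ (Real.exp (r * (u - T)) + Real.exp (r * (-u - T))) / r := by
  rw [le_div_iff₀ hr]
  have a1 := Real.add_one_le_exp (r * (u - T))
  have a2 := Real.add_one_le_exp (r * (-u - T))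
  have p1 := Real.exp_pos (r * (u - T))
  have p2 := Real.exp_pos (r * (-u - T))
  unfold auxClamp
  rcases le_total u T with h | h
  · rw [min_eq_left h]
    rcases le_total (-T) u with h' | h'
    · rw [max_eq_right h']; simp; linarith
    · rw [max_eq_left h', abs_of_nonpos (by linarith)]; nlinarith
  · rw [min_eq_right h, max_eq_right (by linarith), abs_of_nonneg (by linarith)]; nlinarith

lemma aux_sum_f_lin (n : ℕ) (f : (Fin n → Bool) → ℝ) :
    ∑ x, f x * lin n (fCoeff n f) x = 2 ^ n * W1 n f := by
  unfold lin W1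
  simp_rw [Finset.mul_sum]
  rw [Finset.sum_comm]
  refine Finset.sum_congr rfl fun i _ => ?_
  have : ∑ x, f x * sgn1 (x i) = 2 ^ n * fCoeff n f i := by
    unfold fCoeff cubeE
    field_simp
  calc _ = fCoeff n f i * ∑ x, f x * sgn1 (x i) := by
        rw [Finset.mul_sum]; exact Finset.sum_congr rfl fun x _ => by ring
    _ = _ := by rw [this]; ring

lemma aux_W1_le (n : ℕ) (f : (Fin n → Bool) → ℝ) (hf : ∀ x, f x = 0 ∨ f x = 1)
    (hW : 0 < W1 n f) : W1 n f ≤ 1 := by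
  set s := Real.sqrt (W1 n f) with hs
  have hs0 : 0 < s := Real.sqrt_pos.2 hW
  have hsq : s ^ 2 = W1 n f := Real.sq_sqrt hW.le
  have h1 := aux_sum_f_lin n f
  have h2 := aux_mgf n (fCoeff n f) s⁻¹
  have h3 : ∀ x, f x * lin n (fCoeff n f) x ≤
      s * (Real.exp (s⁻¹ * lin n (fCoeff n f) x) * Real.exp (-1)) := by
    intro x
    rw [← Real.exp_add]
    have := Real.add_one_le_exp (s⁻¹ * lin n (fCoeff n f) x + -1)
    have p := Real.exp_pos (s⁻¹ * lin n (fCoeff n f) x + -1)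
    rcases hf x with h | h
    · rw [h]; simp; positivity
    · rw [h, one_mul]
      have e : lin n (fCoeff n f) x = s * (s⁻¹ * lin n (fCoeff n f) x) := by field_simp
      conv_lhs => rw [e]
      apply mul_le_mul_of_nonneg_left _ hs0.le
      linarith
  have h4 := Finset.sum_le_sum (fun x (_ : x ∈ Finset.univ) => h3 x)
  rw [h1, ← Finset.mul_sum, ← Finset.sum_mul] at h4
  have e : s⁻¹ ^ 2 * (∑ i, fCoeff n f i ^ 2) / 2 = 1 / 2 := by
    change s⁻¹ ^ 2 * (W1 n f) / 2 = 1 / 2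
    rw [← hsq]; field_simp
  rw [e] at h2
  have h5 : s * ((∑ x, Real.exp (s⁻¹ * lin n (fCoeff n f) x)) * Real.exp (-1)) ≤
      s * ((2 ^ n * Real.exp (1 / 2)) * Real.exp (-1)) := by gcongr
  have h6 : Real.exp (1 / 2) * Real.exp (-1) ≤ 1 := by
    rw [← Real.exp_add]; exact Real.exp_le_one_iff.2 (by norm_num)
  have h7 : (2 : ℝ) ^ n * W1 n f ≤ 2 ^ n * s := by
    calc _ ≤ _ := h4.trans h5
      _ = 2 ^ n * s * (Real.exp (1 / 2) * Real.exp (-1)) := by ring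
      _ ≤ 2 ^ n * s * 1 := by gcongr
      _ = _ := by ring
  have h8 : W1 n f ≤ s := le_of_mul_le_mul_left h7 (by positivity)
  nlinarith

lemma aux_cov (n : ℕ) (f g : (Fin n → Bool) → ℝ) :
    cubeE n (fun x => f x * g x) - cubeE n f * cubeE n g =
      ∑ x, (f x - cubeE n f) / 2 ^ n * g x := by
  have : ∀ x, (f x - cubeE n f) / 2 ^ n * g x =
    (f x * g x) / 2 ^ n - cubeE n f * (g x / 2 ^ n) := fun x => by ring
  simp_rw [this]
  rw [Finset.sum_sub_distrib, ← Finset.mul_sum, ← Finset.sum_div, ← Finset.sum_div]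
  rfl

lemma aux_mean (n : ℕ) (f : (Fin n → Bool) → ℝ) (hf : ∀ x, f x = 0 ∨ f x = 1) :
    0 ≤ cubeE n f ∧ cubeE n f ≤ 1 := by
  unfold cubeE
  constructor
  · apply div_nonneg _ (by positivity)
    exact Finset.sum_nonneg fun x _ => by rcases hf x with h | h <;> rw [h] <;> norm_num
  · rw [div_le_one (by positivity)]
    calc ∑ x, f x ≤ ∑ x : Fin n → Bool, (1 : ℝ) :=
          Finset.sum_le_sum fun x _ => by rcases hf x with h | h <;> rw [h] <;> norm_num
      _ = 2 ^ n := by simp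

/-- **Correlation with a halfspace.** There is a universal `c > 0` such that any
Boolean function `f : {-1,1}ⁿ → {0,1}` with `W¹(f) > 0` has a halfspace
`g(x) = 1{∑ f̂({i})xᵢ > t}` with `Cov(f,g) ≥ c·√(W¹(f)/log(e/W¹(f)))`. -/
theorem correlation_with_halfspace :
    ∃ c : ℝ, 0 < c ∧ ∀ (n : ℕ) (f : (Fin n → Bool) → ℝ),
      (∀ x, f x = 0 ∨ f x = 1) → 0 < W1 n f →
      ∃ t : ℝ,
        c * Real.sqrt (W1 n f / Real.log (Real.exp 1 / W1 n f)) ≤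
          cubeE n (fun x => f x * halfspace n (fCoeff n f) t x) -
            cubeE n f * cubeE n (halfspace n (fCoeff n f) t) := by
  refine ⟨1 / 8, by norm_num, ?_⟩
  intro n f hf hW
  by_contra hcon
  push Not at hcon
  have hW1 := aux_W1_le n f hf hW
  set W := W1 n f with hWdef
  set l := Real.log (Real.exp 1 / W) with hl
  have hl' : l = 1 - Real.log W := by
    rw [hl, Real.log_div (Real.exp_pos 1).ne' hW.ne', Real.log_exp]
  have hl1 : 1 ≤ l := by
    have := Real.log_nonpos hW.le hW1
    linarith
  have hexp : Real.exp (-(2 * l)) = W ^ 2 * Real.exp (-2) := by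
    rw [hl', show -(2 * (1 - Real.log W)) = Real.log W + Real.log W + -2 by ring,
      Real.exp_add, Real.exp_add, Real.exp_log hW]
    ring
  set p := Real.sqrt W with hp
  set q := Real.sqrt l with hq
  have hp0 : 0 < p := Real.sqrt_pos.2 hW
  have hp2 : p ^ 2 = W := Real.sq_sqrt hW.le
  have hq2 : q ^ 2 = l := Real.sq_sqrt (by linarith)
  have hq1 : 1 ≤ q := by rw [hq]; exact Real.one_le_sqrt.2 hl1
  have hp1 : p ≤ 1 := by rw [hp]; exact Real.sqrt_le_one.2 hW1
  have hq0 : 0 < q := by linarith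
  have hsq : Real.sqrt (W / l) = p / q := Real.sqrt_div hW.le l
  set T := 2 * p * q with hT
  set r := 2 * q / p with hr
  have hT0 : 0 < T := by positivity
  have hr0 : 0 < r := by positivity
  have hr2 : 2 ≤ r := by rw [hr, le_div_iff₀ hp0]; nlinarith
  set L := lin n (fCoeff n f) with hL
  set w : (Fin n → Bool) → ℝ := fun x => (f x - cubeE n f) / 2 ^ n with hw
  have hwsum : ∑ x, w x = 0 := by
    have := aux_cov n f (fun _ => 1)
    simp only [mul_one] at this
    rw [hw, ← this]
    have : cubeE n (fun _ => 1) = 1 := by simp [cubeE]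
    rw [this]; simp
  have hwabs : ∀ x, |w x| ≤ 1 / 2 ^ n := by
    intro x
    obtain ⟨m0, m1⟩ := aux_mean n f hf
    rw [hw]
    simp only
    rw [abs_div, abs_of_pos (show (0 : ℝ) < 2 ^ n by positivity)]
    apply div_le_div_of_nonneg_right _ (by positivity)
    rw [abs_le]
    rcases hf x with h | h <;> rw [h] <;> constructor <;> linarith
  have hwL : ∑ x, w x * L x = W := by
    rw [hw, ← aux_cov n f L]
    have e1 : cubeE n (fun x => f x * L x) = W := by
      unfold cubeE
      rw [hL, aux_sum_f_lin n f]; field_simp; rfl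
    have e2 : cubeE n L = 0 := by
      unfold cubeE
      rw [hL, aux_sum_lin]; simp
    rw [e1, e2]; simp
  have hIntegral : ∫ t in (-T)..T, (∑ x, w x * (if t < L x then (1 : ℝ) else 0)) =
      ∑ x, w x * auxClamp T (L x) := by
    rw [intervalIntegral.integral_finsetSum
      (fun x _ => ((aux_integral T (L x) hT0.le).1).const_mul (w x))]
    have : ∀ x, ∫ t in (-T)..T, w x * (if t < L x then (1 : ℝ) else 0) =
        w x * auxClamp T (L x) + w x * T := by
      intro x
      rw [intervalIntegral.integral_const_mul, (aux_integral T (L x) hT0.le).2]; ring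
    simp_rw [this]
    rw [Finset.sum_add_distrib, ← Finset.sum_mul, hwsum]; simp
  have hupper : ∫ t in (-T)..T, (∑ x, w x * (if t < L x then (1 : ℝ) else 0)) ≤
      ∫ t in (-T)..T, (1 / 8 * (p / q)) := by
    apply intervalIntegral.integral_mono_on (by linarith)
    · have h := IntervalIntegrable.sum (Finset.univ : Finset (Fin n → Bool))
        (fun x _ => ((aux_integral T (L x) hT0.le).1).const_mul (w x))
      have e : (fun t => ∑ x, w x * (if t < L x then (1 : ℝ) else 0)) =
          ∑ x, fun t => w x * (if t < L x then (1 : ℝ) else 0) := by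
        funext t
        rw [Finset.sum_apply]
      rw [e]
      exact h
    · exact intervalIntegrable_const
    · intro t _
      have := hcon t
      rw [aux_cov, hsq] at this
      exact this.le
  have hconst : ∫ t in (-T)..T, (1 / 8 * (p / q)) = W / 2 := by
    rw [intervalIntegral.integral_const, smul_eq_mul, hT, ← hp2]
    field_simp; ring
  have herr : ∑ x, w x * (L x - auxClamp T (L x)) ≤ W ^ 2 * Real.exp (-2) := by
    have hb : ∀ x, w x * (L x - auxClamp T (L x)) ≤ 1 / 2 ^ n * (1 / r * Real.exp (-(r * T))) *
        (Real.exp (r * L x) + Real.exp (-r * L x)) := by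
      intro x
      calc _ ≤ |w x| * |L x - auxClamp T (L x)| := by rw [← abs_mul]; exact le_abs_self _
        _ ≤ 1 / 2 ^ n * ((Real.exp (r * (L x - T)) + Real.exp (r * (-L x - T))) / r) :=
            mul_le_mul (hwabs x) (aux_clamp_err T (L x) r hT0.le hr0) (abs_nonneg _)
              (by positivity)
        _ = _ := by
            rw [show r * (L x - T) = -(r * T) + r * L x by ring,
              show r * (-L x - T) = -(r * T) + -r * L x by ring, Real.exp_add, Real.exp_add]
            ring
    have m1 := aux_mgf n (fCoeff n f) r
    have m2 := aux_mgf n (fCoeff n f) (-r)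
    rw [neg_sq] at m2
    have hrW : r ^ 2 * (∑ i, fCoeff n f i ^ 2) / 2 = 2 * l := by
      change r ^ 2 * W / 2 = 2 * l
      rw [hr, ← hp2, ← hq2]; field_simp
    rw [hrW] at m1 m2
    have hrT : r * T = 4 * l := by rw [hr, hT, ← hq2]; field_simp; ring
    calc _ ≤ _ := Finset.sum_le_sum (fun x _ => hb x)
      _ = 1 / 2 ^ n * (1 / r * Real.exp (-(r * T))) *
          (∑ x, Real.exp (r * L x) + ∑ x, Real.exp (-r * L x)) := by
          rw [← Finset.mul_sum, Finset.sum_add_distrib]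
      _ ≤ 1 / 2 ^ n * (1 / r * Real.exp (-(r * T))) *
          (2 ^ n * Real.exp (2 * l) + 2 ^ n * Real.exp (2 * l)) := by gcongr
      _ = 2 / r * (Real.exp (-(r * T)) * Real.exp (2 * l)) := by field_simp; ring
      _ = 2 / r * Real.exp (-(2 * l)) := by rw [← Real.exp_add, hrT]; congr 2; ring
      _ ≤ 1 * Real.exp (-(2 * l)) := by
          gcongr
          rw [div_le_one hr0]; exact hr2
      _ = _ := by rw [one_mul, hexp]
  have hsplit : ∑ x, w x * (L x - auxClamp T (L x)) = W - ∑ x, w x * auxClamp T (L x) := by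
    simp_rw [mul_sub]
    rw [Finset.sum_sub_distrib, hwL]
  have he2 : Real.exp (-2) < 1 / 2 := by
    rw [Real.exp_neg, inv_eq_one_div]
    apply one_div_lt_one_div_of_lt (by norm_num)
    have := Real.add_one_le_exp (2 : ℝ)
    linarith
  have hWW : W ^ 2 * Real.exp (-2) < W / 2 := by
    have := Real.exp_pos (-2)
    have h : W ^ 2 ≤ W := by nlinarith
    nlinarith
  rw [hIntegral, hconst] at hupper
  linarith

end
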